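/- arXiv:1808.06513 — 2 statements merged into one kernel-verified Lean document; each statement's English description precedes it below -/
import Mathlib

section
/- Let E ⊆ ℝ⁴ = ℍ×ℝ be precisely monotone. Assume the origin (0,0,0,0) ∈ ∂E and (0,0,1,0) ∈ Int(E). Then there exist an open neighborhood W of the origin in ℝ³ and a linear function ψ : ℝ³ → ℝ (so ψ(0,0,0) = 0) such that: (i) {(x,y,ψ(x,y,t),t) : (x,y,t) ∈ W} ⊆ ∂E; (ii) {(x,y,u,t) : (x,y,t) ∈ W and u > ψ(x,y,t)} ⊆ Int(E); (iii) {(x,y,u,t) : (x,y,t) ∈ W and u < ψ(x,y,t)} ⊆ Int(ℝ⁴∖E). -/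
/- The group `ℍ×ℝ`: `ℝ⁴` with coordinates `(x,y,u,t)` and law
`(x,y,u,t)·(x',y',u',t') = (x+x', y+y', u+u', t+t'+2(yx'−y'x))`. -/

noncomputable section

/-- Group law of `ℍ×ℝ` on `ℝ⁴`. -/
def hmul (p q : Fin 4 → ℝ) : Fin 4 → ℝ :=
  ![p 0 + q 0, p 1 + q 1, p 2 + q 2, p 3 + q 3 + 2 * (p 1 * q 0 - q 1 * p 0)]

/-- Horizontal convexity in `ℍ×ℝ`. -/
def HRConvex (C : Set (Fin 4 → ℝ)) : Prop :=
  ∀ p ∈ C, ∀ a b c : ℝ, hmul p ![a, b, c, 0] ∈ C →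
    ∀ s : ℝ, 0 ≤ s → s ≤ 1 → hmul p ![s * a, s * b, s * c, 0] ∈ C

/-- Precise monotonicity in `ℍ×ℝ`. -/
def PreciselyMonotone (E : Set (Fin 4 → ℝ)) : Prop := HRConvex E ∧ HRConvex Eᶜ

/-!
Over a point of `ℍ`, both `E` and its complement meet the vertical line (a *column*) in an interval.
If some column near the origin lay in `E` all the way down, midpoints along horizontal lines would
pass this on to neighbouring columns, and hence, nearby points being joined by horizontal paths, to
all columns near the origin, so that the origin could not be a limit of the complement. So `E`
is, up to its boundary, the epigraph of a height function near the origin. This function is affine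
along horizontal segments because `E` and its complement are horizontally convex.

It remains to see that a horizontally affine function `f` is affine. Averaging over a horizontal
segment and its mirror image in the central axis shows that `f` is affine on that axis; subtracting
this part, assume that `f` vanishes there. Then `f (p + q, t) = f (p, t - ω/2) + f (q, t + ω/2)`
with `ω = ω p q`. Splitting `p` in turn as `(p + q) + (-q)` and comparing shows that `f` does not
depend on `t`, so it is additive, hence linear in `p`. A linear function bounded above near the
origin is continuous, and this yields the topological claims.
-/

open Set Metric Filter Topology Relation

theorem mk_mem_ball_zero {V : Type*} [SeminormedAddCommGroup V] {v : V} {t r : ℝ} :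
    (v, t) ∈ ball (0 : V × ℝ) r ↔ ‖v‖ < r ∧ |t| < r := by
  rw [mem_ball_zero_iff, Prod.norm_mk, max_lt_iff, Real.norm_eq_abs]

section LinearExtension

variable {V F : Type*} [NormedAddCommGroup V] [NormedSpace ℝ V] [AddCommGroup F] [Module ℝ F]
  {r : ℝ} {φ : V → F}

theorem eventually_smul_mem_ball (hr : 0 < r) (v : V) :
    ∀ᶠ l : ℝ in 𝓝[>] 0, l • v ∈ ball (0 : V) r := by
  have hcont : Tendsto (fun l : ℝ ↦ l • v) (𝓝 0) (𝓝 0) :=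
    Continuous.tendsto' (by fun_prop) _ _ (zero_smul ℝ v)
  exact nhdsWithin_le_nhds (hcont (ball_mem_nhds 0 hr))

theorem inv_smul_eq_inv_smul_of_homogeneousOn_ball
    (hsmul : ∀ v ∈ ball (0 : V) r, ∀ l : ℝ, |l| ≤ 1 → φ (l • v) = l • φ v)
    {v : V} {l m : ℝ} (hl : 0 < l) (hm : 0 < m) (hlv : l • v ∈ ball (0 : V) r)
    (hmv : m • v ∈ ball (0 : V) r) : l⁻¹ • φ (l • v) = m⁻¹ • φ (m • v) := by
  wlog hlm : l ≤ m generalizing l m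
  · exact (this hm hl hmv hlv (le_of_not_ge hlm)).symm
  have hratio : |l / m| ≤ 1 := by
    rwa [abs_of_pos (div_pos hl hm), div_le_one hm]
  have hscale := hsmul _ hmv _ hratio
  rw [smul_smul, div_mul_cancel₀ _ hm.ne'] at hscale
  rw [hscale, smul_smul]
  congr 1
  field_simp

theorem exists_linearMap_eqOn_ball (hr : 0 < r)
    (hsmul : ∀ v ∈ ball (0 : V) r, ∀ l : ℝ, |l| ≤ 1 → φ (l • v) = l • φ v)
    (hadd : ∀ v w : V, ∀ᶠ l : ℝ in 𝓝[>] 0, φ (l • v + l • w) = φ (l • v) + φ (l • w)) :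
    ∃ L : V →ₗ[ℝ] F, EqOn φ L (ball 0 r) := by
  have hscale (v : V) : ∃ l : ℝ, 0 < l ∧ l • v ∈ ball (0 : V) r :=
    (eventually_mem_nhdsWithin.and (eventually_smul_mem_ball hr v)).exists
  choose scale hscale_pos hscale_mem using hscale
  let L (v : V) : F := (scale v)⁻¹ • φ (scale v • v)
  have hL {v : V} {l : ℝ} (hl : 0 < l) (hlv : l • v ∈ ball (0 : V) r) : φ (l • v) = l • L v := by
    rw [← inv_smul_eq_iff₀ hl.ne']
    exact inv_smul_eq_inv_smul_of_homogeneousOn_ball hsmul hl (hscale_pos v) hlv (hscale_mem v)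
  have L_add (v w : V) : L (v + w) = L v + L w := by
    obtain ⟨l, hl, hv, hw, hvw, hφ⟩ := (eventually_mem_nhdsWithin.and <|
      (eventually_smul_mem_ball hr v).and <| (eventually_smul_mem_ball hr w).and <|
      (eventually_smul_mem_ball hr (v + w)).and (hadd v w)).exists
    rw [← smul_add, hL hl hv, hL hl hw, hL hl hvw, ← smul_add] at hφ
    exact smul_right_injective F hl.ne' hφ
  have L_smul (c : ℝ) (v : V) : L (c • v) = c • L v := by
    obtain ⟨l, hl, hl_mem, hlc_mem⟩ := (eventually_mem_nhdsWithin.and <|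
      (eventually_smul_mem_ball hr v).and (eventually_smul_mem_ball hr (c • v))).exists
    obtain ⟨m, hm, hm_one, hmc⟩ : ∃ m : ℝ, 0 < m ∧ m ≤ 1 ∧ |m * c| ≤ 1 := by
      refine ⟨(1 + |c|)⁻¹, by positivity, inv_le_one_of_one_le₀ (by simp), ?_⟩
      rw [abs_mul, abs_of_pos (by positivity), inv_mul_le_one₀ (by positivity)]
      linarith
    have hφ : m • φ (l • c • v) = (m * c) • φ (l • v) := by
      rw [← hsmul _ hl_mem _ hmc, ← hsmul _ hlc_mem _ (by rwa [abs_of_pos hm])]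
      congr 1
      module
    rw [hL hl hl_mem, hL hl hlc_mem, smul_comm (m * c), smul_comm m, mul_smul] at hφ
    exact smul_right_injective F hm.ne' (smul_right_injective F hl.ne' hφ)
  refine ⟨⟨⟨L, L_add⟩, L_smul⟩, fun v hv ↦ ?_⟩
  have hφ := hL one_pos ((one_smul ℝ v).symm ▸ hv)
  rwa [one_smul, one_smul] at hφ

end LinearExtension

section HorizontalGeometry

variable {V F : Type*}

section Algebra

variable [AddCommGroup V] [Module ℝ V] [AddCommGroup F] [Module ℝ F]

/-- Two points of the step-two group `V × ℝ` with law `(v, t) (w, s) = (v + w, t + s + ω v w)` lie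
on a common horizontal line: `z⁻¹ w` has vanishing central coordinate. For alternating `ω` the
horizontal line through them is the Euclidean one. -/
def IsHorizontal (ω : V →ₗ[ℝ] V →ₗ[ℝ] ℝ) (z w : V × ℝ) : Prop :=
  w.2 = z.2 + ω z.1 w.1

/-- Horizontal convexity in the product of the group `V × ℝ` with a Euclidean line. A point is
`(z, u)` with `z : V × ℝ` and height `u`; heights do not enter the horizontality condition. -/
def HorizontallyConvex (ω : V →ₗ[ℝ] V →ₗ[ℝ] ℝ) (C : Set ((V × ℝ) × ℝ)) : Prop :=
  ∀ ⦃p⦄, p ∈ C → ∀ ⦃q⦄, q ∈ C → IsHorizontal ω p.1 q.1 → segment ℝ p q ⊆ C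

/-- `f` is affine along the horizontal segments with endpoints in `U`. Meant for convex `U`. -/
def HorizontallyAffineOn (ω : V →ₗ[ℝ] V →ₗ[ℝ] ℝ) (f : V × ℝ → F) (U : Set (V × ℝ)) : Prop :=
  ∀ ⦃z⦄, z ∈ U → ∀ ⦃w⦄, w ∈ U → IsHorizontal ω z w →
    ∀ ⦃a b : ℝ⦄, 0 ≤ a → 0 ≤ b → a + b = 1 → f (a • z + b • w) = a • f z + b • f w

variable {ω : V →ₗ[ℝ] V →ₗ[ℝ] ℝ} {z w : V × ℝ}

theorem IsHorizontal.refl (hω : ω.IsAlt) (z : V × ℝ) : IsHorizontal ω z z := by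
  simp [IsHorizontal, hω.self_eq_zero]

theorem IsHorizontal.symm (hω : ω.IsAlt) (h : IsHorizontal ω z w) : IsHorizontal ω w z := by
  rw [IsHorizontal] at h ⊢
  rw [← hω.neg, h]
  ring

theorem isHorizontal_zero_left (v : V) (t : ℝ) : IsHorizontal ω (0, t) (v, t) := by
  simp [IsHorizontal]

theorem isHorizontal_neg_self (hω : ω.IsAlt) (v : V) (t : ℝ) :
    IsHorizontal ω (v, t) (-v, t) := by
  simp [IsHorizontal, hω.self_eq_zero]

theorem IsHorizontal.neg {v w : V} {t s : ℝ} (h : IsHorizontal ω (v, t) (w, s)) :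
    IsHorizontal ω (-v, t) (-w, s) := by
  simpa [IsHorizontal] using h

theorem exists_apply_ne_zero (hω : ω ≠ 0) : ∃ p q, ω p q ≠ 0 := by
  by_contra! h
  exact hω (LinearMap.ext₂ h)

end Algebra

section Chow

variable [NormedAddCommGroup V] [NormedSpace ℝ V] {ω : V →ₗ[ℝ] V →ₗ[ℝ] ℝ}

theorem exists_apply_eq_of_norm_lt (hω : ω ≠ 0) {r : ℝ} (hr : 0 < r) :
    ∃ ε > 0, ∀ τ, |τ| < ε → ∃ p q : V, ‖p‖ < r ∧ ‖q‖ < r ∧ ω p q = τ := by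
  obtain ⟨p, q, hpq⟩ := exists_apply_ne_zero hω
  obtain ⟨k, hk, hkp, hkq⟩ := (eventually_mem_nhdsWithin.and <|
    (eventually_smul_mem_ball hr p).and (eventually_smul_mem_ball hr q)).exists
  rw [mem_ball_zero_iff] at hkp hkq
  have hk0 : k ≠ 0 := hk.ne'
  have hmax : 0 < |ω (k • p) (k • q)| := by simp [hk0, hpq]
  refine ⟨_, hmax, fun τ hτ ↦ ⟨(τ / ω (k • p) (k • q)) • k • p, k • q, ?_, hkq, ?_⟩⟩
  · rw [norm_smul, norm_div, Real.norm_eq_abs, Real.norm_eq_abs]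
    exact (mul_le_of_le_one_left (norm_nonneg _) ((div_le_one hmax).2 hτ.le)).trans_lt hkp
  · rw [LinearMap.map_smul₂, smul_eq_mul, div_mul_cancel₀ _ (abs_pos.1 hmax)]

/-- A move along a horizontal line between two points of `U`. -/
def HorizontalStep (ω : V →ₗ[ℝ] V →ₗ[ℝ] ℝ) (U : Set (V × ℝ)) (z w : V × ℝ) : Prop :=
  z ∈ U ∧ w ∈ U ∧ IsHorizontal ω z w

-- The loop `0 → p → p + q → 0` lifts to a horizontal path that climbs by `ω p q`.
theorem reflTransGen_horizontalStep_zero (hω : ω.IsAlt) {r t : ℝ} {v p q : V}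
    (hv : ‖v‖ < r) (ht : |t| < r) (hp : ‖p‖ < r / 2) (hq : ‖q‖ < r / 2) (hpq : ω p q = -t) :
    ReflTransGen (HorizontalStep ω (ball 0 r)) (v, t) 0 := by
  have hr : 0 < r := (norm_nonneg v).trans_lt hv
  have hvt : (v, t) ∈ ball (0 : V × ℝ) r := mk_mem_ball_zero.2 ⟨hv, ht⟩
  have h0t : (0, t) ∈ ball (0 : V × ℝ) r := mk_mem_ball_zero.2 ⟨by simpa, ht⟩
  have hpt : (p, t) ∈ ball (0 : V × ℝ) r := mk_mem_ball_zero.2 ⟨by linarith, ht⟩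
  have hpq0 : (p + q, 0) ∈ ball (0 : V × ℝ) r :=
    mk_mem_ball_zero.2 ⟨by linarith [norm_add_le p q], by simpa⟩
  have hclimb : IsHorizontal ω (p, t) (p + q, 0) := by
    simp [IsHorizontal, hω.self_eq_zero, hpq]
  exact .head ⟨hvt, h0t, (isHorizontal_zero_left v t).symm hω⟩ <|
    .head ⟨h0t, hpt, isHorizontal_zero_left p t⟩ <| .head ⟨hpt, hpq0, hclimb⟩ <|
    .single ⟨hpq0, mem_ball_self hr, (isHorizontal_zero_left _ 0).symm hω⟩

theorem exists_ball_reflTransGen_horizontalStep (hω : ω.IsAlt) (hω₀ : ω ≠ 0) {r : ℝ}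
    (hr : 0 < r) : ∃ η > 0, ∀ z ∈ ball (0 : V × ℝ) η, ∀ w ∈ ball (0 : V × ℝ) η,
      ReflTransGen (HorizontalStep ω (ball 0 r)) z w := by
  obtain ⟨ε, hε, hsmall⟩ := exists_apply_eq_of_norm_lt hω₀ (half_pos hr)
  have to_zero : ∀ z ∈ ball (0 : V × ℝ) (min ε r),
      ReflTransGen (HorizontalStep ω (ball 0 r)) z 0 := by
    rintro ⟨v, t⟩ hz
    obtain ⟨hv, ht⟩ := mk_mem_ball_zero.1 hz
    rw [lt_min_iff] at hv ht
    obtain ⟨p, q, hp, hq, hpq⟩ := hsmall (-t) (by rw [abs_neg]; exact ht.1)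
    exact reflTransGen_horizontalStep_zero hω hv.2 ht.2 hp hq hpq
  have : Std.Symm (HorizontalStep ω (ball 0 r)) := ⟨fun _ _ h ↦ ⟨h.2.1, h.1, h.2.2.symm hω⟩⟩
  exact ⟨min ε r, lt_min hε hr, fun z hz w hw ↦ (to_zero z hz).trans (symm (to_zero w hw))⟩

end Chow

namespace HorizontallyAffineOn

variable [AddCommGroup F] [Module ℝ F]

section Algebra

variable [AddCommGroup V] [Module ℝ V] {ω : V →ₗ[ℝ] V →ₗ[ℝ] ℝ} {f g : V × ℝ → F}
  {U U' : Set (V × ℝ)}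

theorem mono (hf : HorizontallyAffineOn ω f U) (h : U' ⊆ U) : HorizontallyAffineOn ω f U' :=
  fun _ hz _ hw ↦ hf (h hz) (h hw)

theorem sub (hf : HorizontallyAffineOn ω f U) (hg : HorizontallyAffineOn ω g U) :
    HorizontallyAffineOn ω (f - g) U := by
  intro z hz w hw hzw a b ha hb hab
  simp only [Pi.sub_apply, hf hz hw hzw ha hb hab, hg hz hw hzw ha hb hab]
  module

theorem of_affineMap (A : V × ℝ →ᵃ[ℝ] F) : HorizontallyAffineOn ω A U :=
  fun _ _ _ _ _ _ _ _ _ hab ↦ Convex.combo_affine_apply hab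

theorem map_midpoint (hf : HorizontallyAffineOn ω f U) {z w : V × ℝ} (hz : z ∈ U) (hw : w ∈ U)
    (hzw : IsHorizontal ω z w) : f (midpoint ℝ z w) = midpoint ℝ (f z) (f w) := by
  simp only [midpoint_eq_smul_add, smul_add, invOf_eq_inv]
  exact hf hz hw hzw (by norm_num) (by norm_num) (by norm_num)

end Algebra

variable [NormedAddCommGroup V] [NormedSpace ℝ V] {ω : V →ₗ[ℝ] V →ₗ[ℝ] ℝ} {f : V × ℝ → F}
  {r : ℝ}

theorem apply_zero_eq_midpoint (hf : HorizontallyAffineOn ω f (ball 0 r)) (hω : ω.IsAlt)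
    {v : V} {t : ℝ} (hv : ‖v‖ < r) (ht : |t| < r) :
    f (0, t) = midpoint ℝ (f (v, t)) (f (-v, t)) := by
  rw [← hf.map_midpoint (mk_mem_ball_zero.2 ⟨hv, ht⟩)
    (mk_mem_ball_zero.2 ⟨by rwa [norm_neg], ht⟩) (isHorizontal_neg_self hω v t)]
  simp [midpoint_eq_smul_add, ← two_smul ℝ t]

-- Average `f` along the horizontal segment and along its reflection in the central axis.
theorem apply_zero_combo (hf : HorizontallyAffineOn ω f (ball 0 r)) (hω : ω.IsAlt)
    {p q : V} {t s a b : ℝ} (hp : (p, t) ∈ ball (0 : V × ℝ) r) (hq : (q, s) ∈ ball (0 : V × ℝ) r)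
    (hpq : IsHorizontal ω (p, t) (q, s)) (ha : 0 ≤ a) (hb : 0 ≤ b) (hab : a + b = 1) :
    f (0, a * t + b * s) = a • f (0, t) + b • f (0, s) := by
  have hpq_mem := convex_ball (0 : V × ℝ) r hp hq ha hb hab
  have segment_eq := hf hp hq hpq ha hb hab
  rw [Prod.smul_mk, Prod.smul_mk, Prod.mk_add_mk, smul_eq_mul, smul_eq_mul] at hpq_mem segment_eq
  rw [mk_mem_ball_zero] at hp hq hpq_mem
  have reflected_eq := hf (mk_mem_ball_zero.2 ⟨(norm_neg p).trans_lt hp.1, hp.2⟩)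
    (mk_mem_ball_zero.2 ⟨(norm_neg q).trans_lt hq.1, hq.2⟩) hpq.neg ha hb hab
  rw [Prod.smul_mk, Prod.smul_mk, Prod.mk_add_mk, smul_neg, smul_neg, ← neg_add, smul_eq_mul,
    smul_eq_mul] at reflected_eq
  rw [hf.apply_zero_eq_midpoint hω hpq_mem.1 hpq_mem.2, segment_eq, reflected_eq,
    hf.apply_zero_eq_midpoint hω hp.1 hp.2, hf.apply_zero_eq_midpoint hω hq.1 hq.2]
  simp only [midpoint_eq_smul_add]
  module

theorem exists_apply_zero_eq_smul_add (hf : HorizontallyAffineOn ω f (ball 0 r)) (hω : ω.IsAlt)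
    (hω₀ : ω ≠ 0) (hr : 0 < r) :
    ∃ ρ > 0, ρ ≤ r ∧ ∃ c d : F, ∀ t, |t| < ρ → f (0, t) = t • c + d := by
  obtain ⟨ε, hε, hsmall⟩ := exists_apply_eq_of_norm_lt hω₀ hr
  set ρ := min ε r / 3 with hρ_def
  have hρ : 0 < ρ := by positivity
  have hρε : 3 * ρ ≤ ε := by rw [hρ_def]; linarith [min_le_left ε r]
  have hρr : 3 * ρ ≤ r := by rw [hρ_def]; linarith [min_le_right ε r]
  obtain ⟨p, q, hp, hq, hpq⟩ := hsmall (2 * ρ) (by rw [abs_of_pos (by positivity)]; linarith)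
  have hp_mem : (p, -ρ) ∈ ball (0 : V × ℝ) r :=
    mk_mem_ball_zero.2 ⟨hp, by rw [abs_neg, abs_of_pos hρ]; linarith⟩
  have hq_mem : (q, ρ) ∈ ball (0 : V × ℝ) r :=
    mk_mem_ball_zero.2 ⟨hq, by rw [abs_of_pos hρ]; linarith⟩
  have hhor : IsHorizontal ω (p, -ρ) (q, ρ) := by
    rw [IsHorizontal, hpq]
    ring
  refine ⟨ρ, hρ, by linarith, (2 * ρ)⁻¹ • (f (0, ρ) - f (0, -ρ)),
    (2 : ℝ)⁻¹ • (f (0, ρ) + f (0, -ρ)), fun t ht ↦ ?_⟩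
  rw [abs_lt] at ht
  have haxis := hf.apply_zero_combo hω hp_mem hq_mem hhor (a := (ρ - t) / (2 * ρ))
    (b := (ρ + t) / (2 * ρ)) (div_nonneg (by linarith) (by linarith))
    (div_nonneg (by linarith) (by linarith)) (by field_simp; ring)
  have ht_combo : (ρ - t) / (2 * ρ) * -ρ + (ρ + t) / (2 * ρ) * ρ = t := by
    field_simp
    ring
  rw [ht_combo] at haxis
  rw [haxis]
  match_scalars <;> field_simp <;> ring

section VanishingOnAxis

variable {v p q : V} {t : ℝ}

theorem apply_neg (hf : HorizontallyAffineOn ω f (ball 0 r))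
    (hf₀ : ∀ t, |t| < r → f (0, t) = 0) (hω : ω.IsAlt)
    (hv : ‖v‖ < r) (ht : |t| < r) : f (-v, t) = -f (v, t) := by
  have hmid := hf.apply_zero_eq_midpoint hω hv ht
  rw [hf₀ t ht, eq_comm, midpoint_eq_smul_add, smul_eq_zero_iff_right (by norm_num)] at hmid
  exact (neg_eq_of_add_eq_zero_right hmid).symm

theorem apply_smul (hf : HorizontallyAffineOn ω f (ball 0 r))
    (hf₀ : ∀ t, |t| < r → f (0, t) = 0) (hω : ω.IsAlt)
    (hv : ‖v‖ < r) (ht : |t| < r) {l : ℝ} (hl : |l| ≤ 1) :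
    f (l • v, t) = l • f (v, t) := by
  have of_nonneg {l : ℝ} (hl₀ : 0 ≤ l) (hl₁ : l ≤ 1) {v : V} (hv : ‖v‖ < r) :
      f (l • v, t) = l • f (v, t) := by
    have hseg := hf (mk_mem_ball_zero.2 ⟨by simpa using (norm_nonneg v).trans_lt hv, ht⟩)
      (mk_mem_ball_zero.2 ⟨hv, ht⟩) (isHorizontal_zero_left v t) (sub_nonneg.2 hl₁) hl₀
      (sub_add_cancel 1 l)
    simpa [hf₀ t ht, ← add_mul] using hseg
  rw [abs_le] at hl
  rcases le_total 0 l with hl₀ | hl₀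
  · exact of_nonneg hl₀ hl.2 hv
  · have hneg := of_nonneg (neg_nonneg.2 hl₀) (by linarith) (v := -v) (by rwa [norm_neg])
    rwa [smul_neg, neg_smul, neg_neg, hf.apply_neg hf₀ hω hv ht, smul_neg, neg_smul,
      neg_neg] at hneg

theorem apply_add (hf : HorizontallyAffineOn ω f (ball 0 r))
    (hf₀ : ∀ t, |t| < r → f (0, t) = 0) (hω : ω.IsAlt)
    (hp : ‖p‖ < r) (hq : ‖q‖ < r) (hpq : ‖p + q‖ < r) (ht : |t| < r)
    (hsub : |t - ω p q / 2| < r) (hadd : |t + ω p q / 2| < r) :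
    f (p + q, t) = f (p, t - ω p q / 2) + f (q, t + ω p q / 2) := by
  have hhor : IsHorizontal ω (p, t - ω p q / 2) (q, t + ω p q / 2) := by
    rw [IsHorizontal]
    ring
  have hmid := hf.map_midpoint (mk_mem_ball_zero.2 ⟨hp, hsub⟩) (mk_mem_ball_zero.2 ⟨hq, hadd⟩) hhor
  have hmid_eq : midpoint ℝ (p, t - ω p q / 2) (q, t + ω p q / 2) = ((2 : ℝ)⁻¹ • (p + q), t) := by
    ext <;> simp [midpoint_eq_smul_add, ← two_mul]
  rw [hmid_eq, midpoint_eq_smul_add, invOf_eq_inv,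
    hf.apply_smul hf₀ hω hpq ht (by norm_num [abs_of_pos])] at hmid
  exact smul_right_injective F (by norm_num) hmid

-- Splitting `p + q` into `p, q` and then `p` into `p + q, -q` returns to `p` with a vertical shift.
theorem apply_sub_half_eq_apply_add (hf : HorizontallyAffineOn ω f (ball 0 r))
    (hf₀ : ∀ t, |t| < r → f (0, t) = 0) (hω : ω.IsAlt)
    (hp : ‖p‖ < r) (hq : ‖q‖ < r) (hpq : ‖p + q‖ < r)
    (ht : |t| < r) (hsub : |t - ω p q / 2| < r) (hadd : |t + ω p q| < r) :
    f (q, t - ω p q / 2) = f (q, t + ω p q) := by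
  have hhalf : |t + ω p q / 2| < r := by
    rw [abs_lt] at *
    constructor <;> linarith
  have hneg : ω (p + q) (-q) = -ω p q := by simp [hω.self_eq_zero]
  have split_add := hf.apply_add hf₀ hω hp hq hpq hhalf (by simpa) (by rwa [add_assoc, add_halves])
  have split_sub := hf.apply_add hf₀ hω hpq (q := -q) (by rwa [norm_neg])
    (by rwa [add_neg_cancel_right]) ht (by rwa [hneg, neg_div, sub_neg_eq_add])
    (by rwa [hneg, neg_div, ← sub_eq_add_neg])
  rw [add_sub_cancel_right, add_assoc, add_halves] at split_add
  rw [add_neg_cancel_right, hneg, neg_div, sub_neg_eq_add, ← sub_eq_add_neg,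
    hf.apply_neg hf₀ hω hq hsub, split_add] at split_sub
  linear_combination (norm := module) split_sub

theorem snd_irrel_of_apply_ne_zero (hf : HorizontallyAffineOn ω f (ball 0 r))
    (hf₀ : ∀ t, |t| < r → f (0, t) = 0) (hω : ω.IsAlt)
    (hq : ‖q‖ < r) (hpq : ω p q ≠ 0) {s : ℝ} (ht : |t| < r)
    (hs : |s| < r) : f (q, t) = f (q, s) := by
  refine (isPreconnected_Ioo (a := -r) (b := r)).induction₂ (fun t s ↦ f (q, t) = f (q, s))
    (fun t ht ↦ ?_) (fun _ _ _ _ _ _ ↦ Eq.trans) (fun _ _ _ _ ↦ Eq.symm) (abs_lt.1 ht)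
    (abs_lt.1 hs)
  let P (s : ℝ) : V := (2 * (s - t) / (3 * ω p q)) • p
  have hP : Continuous P := by fun_prop
  have hPt : P t = 0 := by simp [P]
  have hr : 0 < r := (norm_nonneg q).trans_lt hq
  have hP_norm : ∀ᶠ s in 𝓝[Ioo (-r) r] t, ‖P s‖ < r :=
    nhdsWithin_le_nhds (hP.norm.continuousAt.eventually_lt_const (by simpa [hPt]))
  have hPq_norm : ∀ᶠ s in 𝓝[Ioo (-r) r] t, ‖P s + q‖ < r :=
    nhdsWithin_le_nhds ((hP.add_const q).norm.continuousAt.eventually_lt_const (by simpa [hPt]))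
  filter_upwards [hP_norm, hPq_norm, self_mem_nhdsWithin] with s hPs hPqs hs
  have hωP : ω (P s) q = 2 * (s - t) / 3 := by
    simp only [P, LinearMap.map_smul₂, smul_eq_mul]
    field_simp
  have ht_eq : t = (t + (s - t) / 3) - ω (P s) q / 2 := by rw [hωP]; ring
  have hs_eq : s = (t + (s - t) / 3) + ω (P s) q := by rw [hωP]; ring
  have hcenter : |t + (s - t) / 3| < r := by
    rw [abs_lt]
    constructor <;> linarith [ht.1, ht.2, hs.1, hs.2]
  have hshift := hf.apply_sub_half_eq_apply_add hf₀ hω hPs hq hPqs hcenter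
    (by rw [← ht_eq]; exact abs_lt.2 ht) (by rw [← hs_eq]; exact abs_lt.2 hs)
  rwa [← ht_eq, ← hs_eq] at hshift

theorem snd_irrel (hf : HorizontallyAffineOn ω f (ball 0 r))
    (hf₀ : ∀ t, |t| < r → f (0, t) = 0) (hω : ω.IsAlt)
    (hω₀ : ω ≠ 0) (hv : ‖v‖ < r) {s : ℝ} (ht : |t| < r) (hs : |s| < r) :
    f (v, t) = f (v, s) := by
  by_cases hker : ∃ p, ω p v ≠ 0
  · obtain ⟨p, hp⟩ := hker
    exact hf.snd_irrel_of_apply_ne_zero hf₀ hω hv hp ht hs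
  push Not at hker
  obtain ⟨p, q, hpq⟩ := exists_apply_ne_zero hω₀
  have hr : 0 < r := (norm_nonneg v).trans_lt hv
  obtain ⟨l, hl, hlq, hlq'⟩ := (eventually_mem_nhdsWithin.and <|
    (eventually_smul_mem_ball hr q).and (eventually_smul_mem_ball (sub_pos.2 hv) q)).exists
  rw [mem_ball_zero_iff] at hlq hlq'
  have hl₀ : l ≠ 0 := hl.ne'
  have hpl : ω p (l • q) ≠ 0 := by simp [hl₀, hpq]
  have hpvl : ω p (v - l • q) ≠ 0 := by simpa [hker p] using hpl
  have hvl : ‖v - l • q‖ < r := by linarith [norm_sub_le v (l • q)]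
  have hsplit {t : ℝ} (ht : |t| < r) : f (v, t) = f (v - l • q, t) + f (l • q, t) := by
    have hω_zero : ω (v - l • q) (l • q) = 0 := by
      simp [hω.self_eq_zero, ← hω.neg q v, hker q]
    have hadd := hf.apply_add hf₀ hω hvl hlq (t := t) (by simpa) ht
    rw [hω_zero, zero_div, sub_zero, add_zero, sub_add_cancel] at hadd
    exact hadd ht ht
  rw [hsplit ht, hsplit hs, hf.snd_irrel_of_apply_ne_zero hf₀ hω hvl hpvl ht hs,
    hf.snd_irrel_of_apply_ne_zero hf₀ hω hlq hpl ht hs]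

theorem exists_linearMap_of_apply_zero (hf : HorizontallyAffineOn ω f (ball 0 r))
    (hf₀ : ∀ t, |t| < r → f (0, t) = 0) (hω : ω.IsAlt)
    (hω₀ : ω ≠ 0) (hr : 0 < r) :
    ∃ L : V →ₗ[ℝ] F, ∀ z ∈ ball (0 : V × ℝ) r, f z = L z.1 := by
  have h0 : |(0 : ℝ)| < r := by simpa
  obtain ⟨L, hL⟩ := exists_linearMap_eqOn_ball (φ := fun v ↦ f (v, 0)) hr
    (fun v hv l hl ↦ hf.apply_smul hf₀ hω (mem_ball_zero_iff.1 hv) h0 hl) fun v w ↦ by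
      have hω_small : ∀ᶠ l : ℝ in 𝓝[>] 0, |ω (l • v) (l • w) / 2| < r := by
        have hcont : Continuous fun l : ℝ ↦ |l * (l * ω v w) / 2| := by fun_prop
        have hlt : ∀ᶠ l : ℝ in 𝓝[>] 0, |l * (l * ω v w) / 2| < r :=
          nhdsWithin_le_nhds (hcont.continuousAt.eventually_lt_const (by simpa))
        simpa only [map_smul, LinearMap.smul_apply, smul_eq_mul] using hlt
      filter_upwards [eventually_smul_mem_ball hr v, eventually_smul_mem_ball hr w,
        eventually_smul_mem_ball hr (v + w), hω_small] with l hv hw hvw hω_lt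
      rw [mem_ball_zero_iff] at hv hw hvw
      rw [smul_add] at hvw
      rw [hf.apply_add hf₀ hω hv hw hvw h0 (by rwa [zero_sub, abs_neg]) (by rwa [zero_add]),
        hf.snd_irrel hf₀ hω hω₀ hv (by rwa [zero_sub, abs_neg]) h0,
        hf.snd_irrel hf₀ hω hω₀ hw (by rwa [zero_add]) h0]
  refine ⟨L, fun ⟨v, t⟩ hz ↦ ?_⟩
  obtain ⟨hv, ht⟩ := mk_mem_ball_zero.1 hz
  rw [hf.snd_irrel hf₀ hω hω₀ hv ht h0]
  exact hL (mem_ball_zero_iff.2 hv)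

end VanishingOnAxis

theorem exists_affineMap_eqOn_ball (hf : HorizontallyAffineOn ω f (ball 0 r)) (hω : ω.IsAlt)
    (hω₀ : ω ≠ 0) (hr : 0 < r) :
    ∃ ρ > 0, ρ ≤ r ∧ ∃ A : V × ℝ →ᵃ[ℝ] F, EqOn f A (ball 0 ρ) := by
  obtain ⟨ρ, hρ, hρr, c, d, haxis⟩ := hf.exists_apply_zero_eq_smul_add hω hω₀ hr
  let A : V × ℝ →ᵃ[ℝ] F :=
    ((LinearMap.toSpanSingleton ℝ F c).comp (LinearMap.snd ℝ V ℝ)).toAffineMap +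
      AffineMap.const ℝ _ d
  have hA (z : V × ℝ) : A z = z.2 • c + d := rfl
  have hf_sub : HorizontallyAffineOn ω (f - ⇑A) (ball 0 ρ) :=
    (hf.mono (ball_subset_ball hρr)).sub (of_affineMap A)
  obtain ⟨L, hL⟩ := hf_sub.exists_linearMap_of_apply_zero
    (fun t ht ↦ by rw [Pi.sub_apply, haxis t ht, hA, sub_self]) hω hω₀ hρ
  refine ⟨ρ, hρ, hρr, (L.comp (LinearMap.fst ℝ V ℝ)).toAffineMap + A, fun z hz ↦ ?_⟩
  exact sub_eq_iff_eq_add.1 (hL z hz)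

end HorizontallyAffineOn

section Columns

theorem exists_forall_gt_mem_forall_lt_notMem {α : Type*} [ConditionallyCompleteLinearOrder α]
    {S : Set α} (hS : S.OrdConnected) (hSc : Sᶜ.OrdConnected) {a b : α} (hab : a ≤ b)
    (ha : a ∉ S) (hb : b ∈ S) : ∃ c, (∀ u, c < u → u ∈ S) ∧ ∀ u, u < c → u ∉ S := by
  have hupper : IsUpperSet S := by
    intro s u hsu hs
    by_contra hu
    rcases le_total u b with hub | hbu
    · exact hu (hS.out hs hb ⟨hsu, hub⟩)
    · exact hSc.out ha hu ⟨hab, hbu⟩ hb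
  have hbdd : BddBelow S := ⟨a, fun s hs ↦ le_of_not_ge fun hsa ↦ ha (hupper hsa hs)⟩
  refine ⟨sInf S, fun u hu ↦ ?_, fun u hu ↦ notMem_of_lt_csInf hu hbdd⟩
  obtain ⟨s, hs, hsu⟩ := exists_lt_of_csInf_lt ⟨b, hb⟩ hu
  exact hupper hsu.le hs

variable {X : Type*} {E : Set (X × ℝ)} {f : X → ℝ} {U U' : Set X} {z : X} {u : ℝ}

/-- Over `U`, the set `E` is the epigraph of `f` up to points of the graph, whose membership is
left open. -/
structure IsHeightOn (E : Set (X × ℝ)) (f : X → ℝ) (U : Set X) : Prop where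
  mem_of_lt : ∀ ⦃z⦄, z ∈ U → ∀ ⦃u⦄, f z < u → (z, u) ∈ E
  notMem_of_lt : ∀ ⦃z⦄, z ∈ U → ∀ ⦃u⦄, u < f z → (z, u) ∉ E

theorem exists_isHeightOn (hE : ∀ z ∈ U, {u | (z, u) ∈ E}.OrdConnected)
    (hEc : ∀ z ∈ U, {u | (z, u) ∈ Eᶜ}.OrdConnected)
    (hmeet : ∀ z ∈ U, ∃ a b, a ≤ b ∧ (z, a) ∉ E ∧ (z, b) ∈ E) : ∃ f, IsHeightOn E f U := by
  have hcolumn (z : X) : ∃ c, z ∈ U → (∀ u, c < u → (z, u) ∈ E) ∧ ∀ u, u < c → (z, u) ∉ E := by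
    by_cases hz : z ∈ U
    · obtain ⟨a, b, hab, ha, hb⟩ := hmeet z hz
      obtain ⟨c, hc⟩ := exists_forall_gt_mem_forall_lt_notMem (hE z hz) (hEc z hz) hab ha hb
      exact ⟨c, fun _ ↦ hc⟩
    · exact ⟨0, fun h ↦ absurd h hz⟩
  choose f hf using hcolumn
  exact ⟨f, fun z hz ↦ (hf z hz).1, fun z hz ↦ (hf z hz).2⟩

namespace IsHeightOn

theorem le_of_mem (hf : IsHeightOn E f U) (hz : z ∈ U) (hu : (z, u) ∈ E) : f z ≤ u :=
  le_of_not_gt fun h ↦ hf.notMem_of_lt hz h hu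

theorem le_of_notMem (hf : IsHeightOn E f U) (hz : z ∈ U) (hu : (z, u) ∉ E) : u ≤ f z :=
  le_of_not_gt fun h ↦ hu (hf.mem_of_lt hz h)

theorem mono (hf : IsHeightOn E f U) (h : U' ⊆ U) : IsHeightOn E f U' :=
  ⟨fun _ hz ↦ hf.mem_of_lt (h hz), fun _ hz ↦ hf.notMem_of_lt (h hz)⟩

theorem congr {g : X → ℝ} (hf : IsHeightOn E f U) (hfg : EqOn f g U) : IsHeightOn E g U :=
  ⟨fun _ hz _ hu ↦ hf.mem_of_lt hz (hfg hz ▸ hu), fun _ hz _ hu ↦ hf.notMem_of_lt hz (hfg hz ▸ hu)⟩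

variable [TopologicalSpace X]

theorem mem_interior_of_lt (hf : IsHeightOn E f U) (hU : U ∈ 𝓝 z) (hfz : ContinuousAt f z)
    (hu : f z < u) : (z, u) ∈ interior E := by
  rw [mem_interior_iff_mem_nhds]
  have hlt : ∀ᶠ p : X × ℝ in 𝓝 (z, u), f p.1 < p.2 :=
    (hfz.comp continuousAt_fst).eventually_lt continuousAt_snd hu
  filter_upwards [hlt, continuousAt_fst.preimage_mem_nhds hU] with p hp hpU
  exact hf.mem_of_lt hpU hp

theorem mem_interior_compl_of_lt (hf : IsHeightOn E f U) (hU : U ∈ 𝓝 z) (hfz : ContinuousAt f z)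
    (hu : u < f z) : (z, u) ∈ interior Eᶜ := by
  rw [mem_interior_iff_mem_nhds]
  have hlt : ∀ᶠ p : X × ℝ in 𝓝 (z, u), p.2 < f p.1 :=
    continuousAt_snd.eventually_lt (hfz.comp continuousAt_fst) hu
  filter_upwards [hlt, continuousAt_fst.preimage_mem_nhds hU] with p hp hpU
  exact hf.notMem_of_lt hpU hp

theorem mem_frontier (hf : IsHeightOn E f U) (hz : z ∈ U) : (z, f z) ∈ frontier E := by
  have hcolumn : Continuous fun u : ℝ ↦ (z, u) := by fun_prop
  rw [frontier_eq_closure_inter_closure]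
  constructor
  · exact map_mem_closure (s := Ioi (f z)) hcolumn (by simp) fun u hu ↦ hf.mem_of_lt hz hu
  · exact map_mem_closure (s := Iio (f z)) hcolumn (by simp) fun u hu ↦ hf.notMem_of_lt hz hu

theorem eq_of_mem_frontier (hf : IsHeightOn E f U) (hU : U ∈ 𝓝 z) (hfz : ContinuousAt f z)
    (hu : (z, u) ∈ frontier E) : f z = u := by
  rcases lt_trichotomy (f z) u with h | h | h
  · exact absurd (hf.mem_interior_of_lt hU hfz h) hu.2
  · exact h
  · rw [← frontier_compl] at hu
    exact absurd (hf.mem_interior_compl_of_lt hU hfz h) hu.2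

end IsHeightOn

end Columns

section Monotone

section Algebra

variable [AddCommGroup V] [Module ℝ V] {ω : V →ₗ[ℝ] V →ₗ[ℝ] ℝ} {C E : Set ((V × ℝ) × ℝ)}
  {f : V × ℝ → ℝ} {U : Set (V × ℝ)} {z w : V × ℝ}

theorem IsHorizontal.pointReflection (hω : ω.IsAlt) (h : IsHorizontal ω z w) :
    IsHorizontal ω z (Equiv.pointReflection w z) := by
  rw [IsHorizontal] at h ⊢
  simp only [Equiv.pointReflection_apply, vsub_eq_sub, vadd_eq_add, Prod.snd_add, Prod.snd_sub,
    Prod.fst_add, Prod.fst_sub, map_add, map_sub, hω.self_eq_zero, h]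
  ring

theorem HorizontallyConvex.ordConnected_column (hC : HorizontallyConvex ω C) (hω : ω.IsAlt)
    (z : V × ℝ) : {u | (z, u) ∈ C}.OrdConnected := by
  refine ordConnected_iff.2 fun a ha b hb hab u hu ↦ hC ha hb (IsHorizontal.refl hω z) ?_
  rw [← Prod.image_mk_segment_right, segment_eq_Icc hab]
  exact mem_image_of_mem _ hu

theorem IsHeightOn.horizontallyAffineOn (hf : IsHeightOn E f U) (hE : HorizontallyConvex ω E)
    (hEc : HorizontallyConvex ω Eᶜ) (hU : Convex ℝ U) : HorizontallyAffineOn ω f U := by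
  intro z hz w hw hzw a b ha hb hab
  have hcombo_mem := hU hz hw ha hb hab
  have combo_shift (ε : ℝ) : a * (f z + ε) + b * (f w + ε) = a * f z + b * f w + ε := by
    linear_combination ε * hab
  refine le_antisymm (le_of_forall_pos_le_add fun ε hε ↦ ?_)
    (le_of_forall_pos_le_add fun ε hε ↦ ?_)
  · have hmem := hE (hf.mem_of_lt hz (lt_add_of_pos_right _ hε))
      (hf.mem_of_lt hw (lt_add_of_pos_right _ hε)) hzw ⟨a, b, ha, hb, hab, rfl⟩
    exact (hf.le_of_mem hcombo_mem hmem).trans_eq (combo_shift ε)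
  · have hmem := hEc (hf.notMem_of_lt hz (add_lt_of_neg_right _ (neg_lt_zero.2 hε)))
      (hf.notMem_of_lt hw (add_lt_of_neg_right _ (neg_lt_zero.2 hε))) hzw
      ⟨a, b, ha, hb, hab, rfl⟩
    have hle := (combo_shift (-ε)).symm.trans_le (hf.le_of_notMem hcombo_mem hmem)
    simp only [smul_eq_mul]
    linarith

end Algebra

variable [NormedAddCommGroup V] [NormedSpace ℝ V] {ω : V →ₗ[ℝ] V →ₗ[ℝ] ℝ}
  {E : Set ((V × ℝ) × ℝ)} {a b r : ℝ}

-- `(w, u)` is the midpoint of the deep point `(z, 2 * u - b)` and the point of height `b` above the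
-- reflection of `z` in `w`.
theorem HorizontallyConvex.column_subset_of_horizontalStep (hE : HorizontallyConvex ω E)
    (hω : ω.IsAlt) (htop : ∀ z ∈ ball (0 : V × ℝ) (3 * r), (z, b) ∈ E) {z w : V × ℝ}
    (hzw : HorizontalStep ω (ball 0 r) z w) (hz : ∀ u < b, (z, u) ∈ E) :
    ∀ u < b, (w, u) ∈ E := by
  intro u hu
  obtain ⟨hz_mem, hw_mem, hhor⟩ := hzw
  rw [mem_ball_zero_iff] at hz_mem hw_mem
  have hreflection : Equiv.pointReflection w z ∈ ball (0 : V × ℝ) (3 * r) := by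
    rw [mem_ball_zero_iff, Equiv.pointReflection_apply, vsub_eq_sub, vadd_eq_add]
    linarith [norm_add_le (w - z) w, norm_sub_le w z]
  have hheight : midpoint ℝ (2 * u - b) b = u := by
    rw [midpoint_eq_smul_add, sub_add_cancel, smul_eq_mul, invOf_mul_cancel_left]
  have hmidpoint : midpoint ℝ (z, 2 * u - b) (Equiv.pointReflection w z, b) = (w, u) :=
    Prod.ext ((AffineMap.fst_lineMap _ _ _).trans (midpoint_pointReflection_right w z))
      ((AffineMap.snd_lineMap _ _ _).trans hheight)
  exact hE (hz (2 * u - b) (by linarith)) (htop _ hreflection) (hhor.pointReflection hω)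
    (hmidpoint ▸ midpoint_mem_segment _ _)

theorem HorizontallyConvex.exists_ball_forall_exists_notMem (hE : HorizontallyConvex ω E)
    (hω : ω.IsAlt) (hω₀ : ω ≠ 0) (hr : 0 < r) (htop : ∀ z ∈ ball (0 : V × ℝ) r, (z, b) ∈ E)
    (hab : a < b) (ha : ((0 : V × ℝ), a) ∈ closure Eᶜ) :
    ∃ η > 0, ∀ z ∈ ball (0 : V × ℝ) η, ∃ u < b, (z, u) ∉ E := by
  obtain ⟨η, hη, hconn⟩ := exists_ball_reflTransGen_horizontalStep hω hω₀ (div_pos hr three_pos)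
  refine ⟨η, hη, fun z hz ↦ ?_⟩
  by_contra! hfull
  rw [← mul_div_cancel₀ r (three_ne_zero' ℝ)] at htop
  have hfull_of_path {w : V × ℝ} (hpath : ReflTransGen (HorizontalStep ω (ball 0 (r / 3))) z w) :
      ∀ u < b, (w, u) ∈ E := by
    induction hpath with
    | refl => exact hfull
    | tail _ hstep ih => exact hE.column_subset_of_horizontalStep hω htop hstep ih
  obtain ⟨⟨w, u⟩, ⟨hw, hu⟩, hwu⟩ := mem_closure_iff_nhds.1 ha _
    (prod_mem_nhds (ball_mem_nhds (0 : V × ℝ) hη) (Iio_mem_nhds hab))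
  exact hwu (hfull_of_path (hconn z hz w hw) u hu)

theorem continuous_of_forall_mem_ball_le {G : Type*} [NormedAddCommGroup G] [NormedSpace ℝ G]
    (L : G →ₗ[ℝ] ℝ) {c : ℝ} (hr : 0 < r) (hL : ∀ z ∈ ball (0 : G) r, L z ≤ c) :
    Continuous L := by
  have habs : ∀ z ∈ ball (0 : G) r, ‖L z‖ ≤ c := fun z hz ↦
    abs_le'.2 ⟨hL z hz, by simpa using hL (-z) (by simpa using hz)⟩
  obtain ⟨C, hC⟩ := L.bound_of_ball_bound hr c habs
  exact AddMonoidHomClass.continuous_of_bound L C hC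

theorem exists_ball_isHeightOn (hE : HorizontallyConvex ω E) (hEc : HorizontallyConvex ω Eᶜ)
    (hω : ω.IsAlt) (hω₀ : ω ≠ 0) (hab : a < b) (ha : ((0 : V × ℝ), a) ∈ closure Eᶜ)
    (hb : ((0 : V × ℝ), b) ∈ interior E) :
    ∃ r > 0, ∃ f, IsHeightOn E f (ball (0 : V × ℝ) r) ∧ ∀ z ∈ ball (0 : V × ℝ) r, f z ≤ b := by
  have htop : ∀ᶠ z in 𝓝 (0 : V × ℝ), (z, b) ∈ E :=
    (Continuous.tendsto (by fun_prop : Continuous fun z : V × ℝ ↦ (z, b)) 0).eventually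
      (mem_interior_iff_mem_nhds.1 hb)
  obtain ⟨δ, hδ, htop_ball⟩ := Metric.eventually_nhds_iff_ball.1 htop
  obtain ⟨η, hη, hbelow⟩ := hE.exists_ball_forall_exists_notMem hω hω₀ hδ htop_ball hab ha
  have hmin_le : ball (0 : V × ℝ) (min δ η) ⊆ ball 0 δ := ball_subset_ball (min_le_left δ η)
  obtain ⟨f, hf⟩ := exists_isHeightOn (U := ball (0 : V × ℝ) (min δ η))
    (fun z _ ↦ hE.ordConnected_column hω z) (fun z _ ↦ hEc.ordConnected_column hω z)
    fun z hz ↦ by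
      obtain ⟨u, hu, hzu⟩ := hbelow z (ball_subset_ball (min_le_right δ η) hz)
      exact ⟨u, b, hu.le, hzu, htop_ball z (hmin_le hz)⟩
  exact ⟨min δ η, lt_min hδ hη, f, hf, fun z hz ↦ hf.le_of_mem hz (htop_ball z (hmin_le hz))⟩

theorem exists_ball_isHeightOn_continuousLinearMap (hω : ω.IsAlt) (hω₀ : ω ≠ 0)
    (hE : HorizontallyConvex ω E) (hEc : HorizontallyConvex ω Eᶜ)
    (h₀ : (0 : (V × ℝ) × ℝ) ∈ frontier E) (hb₀ : 0 < b) (hb : ((0 : V × ℝ), b) ∈ interior E) :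
    ∃ r > 0, ∃ ψ : V × ℝ →L[ℝ] ℝ, IsHeightOn E ψ (ball (0 : V × ℝ) r) := by
  rw [frontier_eq_closure_inter_closure] at h₀
  obtain ⟨r, hr, f, hf, hf_le⟩ := exists_ball_isHeightOn hE hEc hω hω₀ hb₀ h₀.2 hb
  obtain ⟨ρ, hρ, hρr, A, hA⟩ :=
    (hf.horizontallyAffineOn hE hEc (convex_ball _ _)).exists_affineMap_eqOn_ball hω hω₀ hr
  have hA_height : IsHeightOn E A (ball (0 : V × ℝ) ρ) :=
    (hf.mono (ball_subset_ball hρr)).congr hA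
  have hA_eq (z : V × ℝ) : A z = A.linear z + A 0 := congrFun A.decomp z
  have hlinear : Continuous A.linear := by
    refine continuous_of_forall_mem_ball_le A.linear (c := b - A 0) hρ fun z hz ↦ ?_
    linarith [hA_eq z, hA hz, hf_le z (ball_subset_ball hρr hz)]
  have hA_zero : A 0 = 0 := by
    refine hA_height.eq_of_mem_frontier (ball_mem_nhds 0 hρ) ?_ ?_
    · rw [A.decomp]
      exact (hlinear.add continuous_const).continuousAt
    · rwa [frontier_eq_closure_inter_closure]
  exact ⟨ρ, hρ, ⟨A.linear, hlinear⟩, hA_height.congr fun z _ ↦ by simp [hA_eq z, hA_zero]⟩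

theorem monotone_U_epigraph_local_general (hω : ω.IsAlt) (hω₀ : ω ≠ 0)
    (hE : HorizontallyConvex ω E) (hEc : HorizontallyConvex ω Eᶜ)
    (h₀ : (0 : (V × ℝ) × ℝ) ∈ frontier E) (hb₀ : 0 < b) (hb : ((0 : V × ℝ), b) ∈ interior E) :
    ∃ W : Set (V × ℝ), IsOpen W ∧ 0 ∈ W ∧ ∃ ψ : V × ℝ →L[ℝ] ℝ,
      (∀ z ∈ W, (z, ψ z) ∈ frontier E) ∧
      (∀ z ∈ W, ∀ u, ψ z < u → (z, u) ∈ interior E) ∧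
      (∀ z ∈ W, ∀ u, u < ψ z → (z, u) ∈ interior Eᶜ) := by
  obtain ⟨r, hr, ψ, hψ⟩ :=
    exists_ball_isHeightOn_continuousLinearMap hω hω₀ hE hEc h₀ hb₀ hb
  refine ⟨ball 0 r, isOpen_ball, mem_ball_self hr, ψ, fun z hz ↦ hψ.mem_frontier hz,
    fun z hz u hu ↦ ?_, fun z hz u hu ↦ ?_⟩
  · exact hψ.mem_interior_of_lt (isOpen_ball.mem_nhds hz) ψ.continuous.continuousAt hu
  · exact hψ.mem_interior_compl_of_lt (isOpen_ball.mem_nhds hz) ψ.continuous.continuousAt hu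

end Monotone

end HorizontalGeometry

section Coordinates

/-- The form of the Heisenberg group: `(v, t) (w, s) = (v + w, t + s + heisenbergForm v w)`. -/
def heisenbergForm : ℝ × ℝ →ₗ[ℝ] ℝ × ℝ →ₗ[ℝ] ℝ :=
  LinearMap.mk₂ ℝ (fun v w ↦ 2 * (v.2 * w.1 - w.2 * v.1))
    (fun _ _ _ ↦ by simp only [Prod.fst_add, Prod.snd_add]; ring)
    (fun _ _ _ ↦ by simp only [Prod.smul_fst, Prod.smul_snd, smul_eq_mul]; ring)
    (fun _ _ _ ↦ by simp only [Prod.fst_add, Prod.snd_add]; ring)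
    (fun _ _ _ ↦ by simp only [Prod.smul_fst, Prod.smul_snd, smul_eq_mul]; ring)

theorem heisenbergForm_apply (v w : ℝ × ℝ) :
    heisenbergForm v w = 2 * (v.2 * w.1 - w.2 * v.1) :=
  rfl

theorem heisenbergForm_isAlt : heisenbergForm.IsAlt := fun v ↦ by
  rw [heisenbergForm_apply, sub_self, mul_zero]

theorem heisenbergForm_ne_zero : heisenbergForm ≠ 0 := fun h ↦ by
  simpa [heisenbergForm_apply] using LinearMap.congr_fun₂ h (0, 1) (1, 0)

/-- The coordinates `(x, y, u, t)` of the point `(((x, y), t), u)` of `ℍ×ℝ`. The Euclidean height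
`u` precedes the central coordinate `t`. -/
def heisenbergCoords : ((ℝ × ℝ) × ℝ) × ℝ ≃ₜ (Fin 4 → ℝ) where
  toFun p := ![p.1.1.1, p.1.1.2, p.2, p.1.2]
  invFun q := (((q 0, q 1), q 3), q 2)
  left_inv _ := rfl
  right_inv q := by ext i; fin_cases i <;> rfl
  continuous_toFun := by fun_prop
  continuous_invFun := by fun_prop

theorem heisenbergCoords_apply (p : ((ℝ × ℝ) × ℝ) × ℝ) :
    heisenbergCoords p = ![p.1.1.1, p.1.1.2, p.2, p.1.2] :=
  rfl

/-- The point `((x, y), t)` of `ℍ` with coordinates `(x, y, t)`. -/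
def heisenbergPoint : (Fin 3 → ℝ) →L[ℝ] (ℝ × ℝ) × ℝ :=
  ((ContinuousLinearMap.proj 0).prod (ContinuousLinearMap.proj 1)).prod
    (ContinuousLinearMap.proj 2)

theorem hmul_heisenbergCoords {p q : ((ℝ × ℝ) × ℝ) × ℝ} (h : IsHorizontal heisenbergForm p.1 q.1)
    (s : ℝ) : hmul (heisenbergCoords p)
      ![s * (q.1.1.1 - p.1.1.1), s * (q.1.1.2 - p.1.1.2), s * (q.2 - p.2), 0] =
        heisenbergCoords (p + s • (q - p)) := by
  rw [IsHorizontal, heisenbergForm_apply] at h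
  ext i
  fin_cases i <;> simp [hmul, heisenbergCoords_apply, h]
  ring

theorem HRConvex.horizontallyConvex_preimage {C : Set (Fin 4 → ℝ)} (hC : HRConvex C) :
    HorizontallyConvex heisenbergForm (heisenbergCoords ⁻¹' C) := by
  intro p hp q hq hpq
  have hq_mem := hmul_heisenbergCoords hpq 1
  simp only [one_mul, one_smul, add_sub_cancel] at hq_mem
  rw [segment_eq_image']
  rintro _ ⟨s, ⟨hs₀, hs₁⟩, rfl⟩
  rw [mem_preimage, ← hmul_heisenbergCoords hpq]
  exact hC _ hp _ _ _ (hq_mem ▸ hq) s hs₀ hs₁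

end Coordinates

/-- **Monotone `U`-epigraphs (local statement):** near the origin the boundary of `E`
is the graph of a linear function `ψ(x,y,t)` in the `u`-direction, with the epigraph
in `Int(E)` and the ipograph in `Int(Eᶜ)`. -/
theorem monotone_U_epigraph_local
    (E : Set (Fin 4 → ℝ)) (hE : PreciselyMonotone E)
    (h0 : (0 : Fin 4 → ℝ) ∈ frontier E)
    (h1 : (![0, 0, 1, 0] : Fin 4 → ℝ) ∈ interior E) :
    ∃ W : Set (Fin 3 → ℝ), IsOpen W ∧ (0 : Fin 3 → ℝ) ∈ W ∧
      ∃ ψ : (Fin 3 → ℝ) →ₗ[ℝ] ℝ,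
        (∀ w ∈ W, (![w 0, w 1, ψ w, w 2] : Fin 4 → ℝ) ∈ frontier E) ∧
        (∀ w ∈ W, ∀ u : ℝ, ψ w < u → (![w 0, w 1, u, w 2] : Fin 4 → ℝ) ∈ interior E) ∧
        (∀ w ∈ W, ∀ u : ℝ, u < ψ w → (![w 0, w 1, u, w 2] : Fin 4 → ℝ) ∈ interior Eᶜ) := by
  have hcoords_zero : heisenbergCoords 0 = 0 := by
    ext i
    fin_cases i <;> rfl
  obtain ⟨W, hW, h0W, ψ, hgraph, hepi, hhypo⟩ :=
    monotone_U_epigraph_local_general heisenbergForm_isAlt heisenbergForm_ne_zero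
      hE.1.horizontallyConvex_preimage hE.2.horizontallyConvex_preimage
      (by rwa [← heisenbergCoords.preimage_frontier, mem_preimage, hcoords_zero]) one_pos
      (by rwa [← heisenbergCoords.preimage_interior])
  simp only [← preimage_compl, ← heisenbergCoords.preimage_frontier,
    ← heisenbergCoords.preimage_interior] at hgraph hepi hhypo
  exact ⟨heisenbergPoint ⁻¹' W, hW.preimage heisenbergPoint.continuous, by simpa,
    ψ.comp heisenbergPoint, fun w ↦ hgraph _, fun w ↦ hepi _, fun w ↦ hhypo _⟩
end
end

section
/- Let E ⊆ ℝ⁴ = ℍ×ℝ be precisely monotone. Assume the origin (0,0,0,0) ∈ ∂E, (0,0,1,0) ∈ Int(E), and that there exist real numbers a, b, c and an open neighborhood W of the origin in ℝ³ such that {(x,y,ax+by+ct,t) : (x,y,t) ∈ W} ⊆ ∂E, {(x,y,u,t) : (x,y,t) ∈ W and u > ax+by+ct} ⊆ Int(E), and {(x,y,u,t) : (x,y,t) ∈ W and u < ax+by+ct} ⊆ Int(ℝ⁴∖E). Then ∂E = {(x,y,u,t) ∈ ℝ⁴ : u = ax + by + ct}. -/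
/- The group `ℍ×ℝ`: `ℝ⁴` with coordinates `(x,y,u,t)` and law
`(x,y,u,t)·(x',y',u',t') = (x+x', y+y', u+u', t+t'+2(yx'−y'x))`. -/

noncomputable section

/-!
Let `f` be affine, and call `w = (x, y, t)` good if `E` contains the points over `w` above the graph
of `f` and misses those below it. If `w₁` and `w₂` are good and `w, w₁, w₂` lie in this order on a
horizontal line of `ℍ`, then `w` is good: a point of `Eᶜ` above the graph over `w` could be joined
to a point of `Eᶜ` below the graph over `w₂` by a segment which over `w₁` is still above the graph,
hence in `E`; similarly for points of `E` below the graph. So the interior of the set of good points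
is stable under moves along horizontal lines, and any two points of `ℍ` are joined by finitely many
such moves.
-/

open Filter Set Topology

/-- The point `(x, y, u, t)` of `ℍ×ℝ` at height `u` over the point `w = (x, y, t)` of `ℍ`. -/
def pointOver (w : Fin 3 → ℝ) (u : ℝ) : Fin 4 → ℝ := ![w 0, w 1, u, w 2]

/-- The right translate `w·(α, β, 0)` of a point `w = (x, y, t)` of `ℍ` by a horizontal vector. -/
def horizontalTranslate (w : Fin 3 → ℝ) (α β : ℝ) : Fin 3 → ℝ :=
  ![w 0 + α, w 1 + β, w 2 + 2 * (w 1 * α - β * w 0)]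

/-- Over the point `w` of `ℍ`, the set `E` agrees with the epigraph of `f`, except possibly on the
graph itself. -/
def IsEpigraphOver (E : Set (Fin 4 → ℝ)) (f : (Fin 3 → ℝ) → ℝ) (w : Fin 3 → ℝ) : Prop :=
  ∀ u, (f w < u → pointOver w u ∈ E) ∧ (u < f w → pointOver w u ∉ E)

theorem pointOver_eta (v : Fin 4 → ℝ) : pointOver ![v 0, v 1, v 3] (v 2) = v := by
  ext i; fin_cases i <;> rfl

theorem continuous_pointOver (w : Fin 3 → ℝ) : Continuous (pointOver w) := by
  unfold pointOver; fun_prop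

theorem hmul_pointOver (w : Fin 3 → ℝ) (u α β γ : ℝ) :
    hmul (pointOver w u) ![α, β, γ, 0] = pointOver (horizontalTranslate w α β) (u + γ) := by
  ext i; fin_cases i <;> simp [hmul, pointOver, horizontalTranslate]

theorem continuous_horizontalTranslate (α β : ℝ) :
    Continuous fun w ↦ horizontalTranslate w α β := by
  unfold horizontalTranslate; fun_prop

theorem horizontalTranslate_neg (w : Fin 3 → ℝ) (α β : ℝ) :
    horizontalTranslate (horizontalTranslate w α β) (-α) (-β) = w := by
  ext i; fin_cases i <;> simp [horizontalTranslate]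
  ring

theorem horizontalTranslate_mul (w : Fin 3 → ℝ) (α β s : ℝ) :
    horizontalTranslate w (s * α) (s * β) =
      AffineMap.lineMap w (horizontalTranslate w α β) s := by
  ext i; fin_cases i <;> simp [horizontalTranslate, AffineMap.pi_lineMap_apply,
    AffineMap.lineMap_apply_ring'] <;> ring

theorem horizontal_induction_zero {P : (Fin 3 → ℝ) → Prop} (zero : P 0)
    (step : ∀ w α β, P (horizontalTranslate w α β) → P w) (w : Fin 3 → ℝ) : P w := by
  -- `(x, y, t) → (0, 0, t) → (1, 0, t) → (1, t/2, 0) → 0`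
  apply step w (-w 0) (-w 1)
  apply step _ 1 0
  apply step _ 0 (w 2 / 2)
  apply step _ (-1) (-(w 2 / 2))
  convert zero
  ext i; fin_cases i <;> simp [horizontalTranslate]
  ring

theorem horizontal_induction {P : (Fin 3 → ℝ) → Prop} {w₀ : Fin 3 → ℝ} (base : P w₀)
    (step : ∀ w α β, P (horizontalTranslate w α β) → P w) (w : Fin 3 → ℝ) : P w := by
  have step_forward (w α β) (hw : P w) : P (horizontalTranslate w α β) :=
    step _ (-α) (-β) (by rwa [horizontalTranslate_neg])
  have zero : P 0 := by
    by_contra h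
    exact horizontal_induction_zero (P := fun w ↦ ¬ P w) h
      (fun w α β hn hw ↦ hn (step_forward w α β hw)) w₀ base
  exact horizontal_induction_zero zero step w

theorem HRConvex.pointOver_mem {C : Set (Fin 4 → ℝ)} (hC : HRConvex C) {w : Fin 3 → ℝ}
    {u α β γ s : ℝ} (hs : s ∈ Icc 0 1) (hw : pointOver w u ∈ C)
    (hend : pointOver (horizontalTranslate w α β) (u + γ) ∈ C) :
    pointOver (horizontalTranslate w (s * α) (s * β)) (u + s * γ) ∈ C := by
  rw [← hmul_pointOver] at hend ⊢
  exact hC _ hw α β γ hend s hs.1 hs.2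

namespace IsEpigraphOver

variable {E : Set (Fin 4 → ℝ)}

theorem of_horizontalTranslate (hE : PreciselyMonotone E) (f : (Fin 3 → ℝ) →ᵃ[ℝ] ℝ)
    {w : Fin 3 → ℝ} {α β s : ℝ} (hs : s ∈ Ioo 0 1)
    (hmid : IsEpigraphOver E f (horizontalTranslate w (s * α) (s * β)))
    (hend : IsEpigraphOver E f (horizontalTranslate w α β)) :
    IsEpigraphOver E f w := by
  intro u
  have f_mid : f (horizontalTranslate w (s * α) (s * β)) =
      s * (f (horizontalTranslate w α β) - f w) + f w := by
    rw [horizontalTranslate_mul, f.apply_lineMap, AffineMap.lineMap_apply_ring']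
  obtain ⟨k, hk_one, hk⟩ := exists_between ((one_lt_inv₀ hs.1).2 hs.2)
  have hsk : s * k < 1 := by rwa [← lt_inv_mul_iff₀ hs.1, mul_one]
  -- With this slope, the segment from height `u` over `w` crosses the graph at time `1 / k`.
  let γ := f (horizontalTranslate w α β) - f w - k * (u - f w)
  have gap_end : u + γ - f (horizontalTranslate w α β) = (1 - k) * (u - f w) := by ring
  have gap_mid : u + s * γ - f (horizontalTranslate w (s * α) (s * β)) =
      (1 - s * k) * (u - f w) := by rw [f_mid]; ring
  constructor
  · intro hu
    have end_notMem := (hend (u + γ)).2 <| sub_neg.1 <|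
      gap_end ▸ mul_neg_of_neg_of_pos (sub_neg.2 hk_one) (sub_pos.2 hu)
    have mid_mem := (hmid (u + s * γ)).1 <| sub_pos.1 <|
      gap_mid ▸ mul_pos (sub_pos.2 hsk) (sub_pos.2 hu)
    by_contra hw
    exact hE.2.pointOver_mem (Ioo_subset_Icc_self hs) hw end_notMem mid_mem
  · intro hu hw
    have end_mem := (hend (u + γ)).1 <| sub_pos.1 <|
      gap_end ▸ mul_pos_of_neg_of_neg (sub_neg.2 hk_one) (sub_neg.2 hu)
    have mid_notMem := (hmid (u + s * γ)).2 <| sub_neg.1 <|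
      gap_mid ▸ mul_neg_of_pos_of_neg (sub_pos.2 hsk) (sub_neg.2 hu)
    exact mid_notMem (hE.1.pointOver_mem (Ioo_subset_Icc_self hs) hw end_mem)

theorem of_horizontalTranslate_mem_interior (hE : PreciselyMonotone E)
    (f : (Fin 3 → ℝ) →ᵃ[ℝ] ℝ) {w : Fin 3 → ℝ} {α β : ℝ}
    (h : horizontalTranslate w α β ∈ interior {w | IsEpigraphOver E f w}) :
    IsEpigraphOver E f w := by
  have tendsto_end : Tendsto (fun s ↦ horizontalTranslate w (s * α) (s * β))
      (𝓝[<] 1) (𝓝 (horizontalTranslate w α β)) := by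
    have : Continuous fun s ↦ horizontalTranslate w (s * α) (s * β) := by
      unfold horizontalTranslate; fun_prop
    simpa using (this.tendsto 1).mono_left nhdsWithin_le_nhds
  obtain ⟨s, hmid, hs⟩ := ((tendsto_end.eventually (mem_interior_iff_mem_nhds.1 h)).and
    (Ioo_mem_nhdsLT zero_lt_one)).exists
  exact of_horizontalTranslate hE f hs hmid (interior_subset h)

theorem mem_interior_of_horizontalTranslate (hE : PreciselyMonotone E)
    (f : (Fin 3 → ℝ) →ᵃ[ℝ] ℝ) {w : Fin 3 → ℝ} {α β : ℝ}
    (h : horizontalTranslate w α β ∈ interior {w | IsEpigraphOver E f w}) :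
    w ∈ interior {w | IsEpigraphOver E f w} :=
  interior_maximal (fun _ hw ↦ of_horizontalTranslate_mem_interior hE f hw)
    (isOpen_interior.preimage (continuous_horizontalTranslate α β)) h

theorem forall_of_isOpen (hE : PreciselyMonotone E) (f : (Fin 3 → ℝ) →ᵃ[ℝ] ℝ)
    {W : Set (Fin 3 → ℝ)} (hW : IsOpen W) (hW_nonempty : W.Nonempty)
    (h : ∀ w ∈ W, IsEpigraphOver E f w) (w : Fin 3 → ℝ) : IsEpigraphOver E f w := by
  obtain ⟨w₀, hw₀⟩ := hW_nonempty
  exact interior_subset (horizontal_induction (interior_maximal h hW hw₀)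
    (fun _ _ _ ↦ mem_interior_of_horizontalTranslate hE f) w)

theorem pointOver_mem_frontier {f : (Fin 3 → ℝ) → ℝ} {w : Fin 3 → ℝ}
    (h : IsEpigraphOver E f w) : pointOver w (f w) ∈ frontier E := by
  rw [frontier_eq_closure_inter_closure]
  constructor
  · exact map_mem_closure (continuous_pointOver w) (by simp) fun u (hu : u ∈ Ioi (f w)) ↦ (h u).1 hu
  · exact map_mem_closure (continuous_pointOver w) (by simp) fun u (hu : u ∈ Iio (f w)) ↦ (h u).2 hu

theorem frontier_subset {f : (Fin 3 → ℝ) → ℝ} (hf : Continuous f)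
    (h : ∀ w, IsEpigraphOver E f w) : frontier E ⊆ {v | v 2 = f ![v 0, v 1, v 3]} := by
  have above_mem_interior : {v : Fin 4 → ℝ | f ![v 0, v 1, v 3] < v 2} ⊆ interior E :=
    interior_maximal (fun v hv ↦ pointOver_eta v ▸ (h _ _).1 hv)
      (isOpen_lt (by fun_prop) (by fun_prop))
  have below_mem_interior : {v : Fin 4 → ℝ | v 2 < f ![v 0, v 1, v 3]} ⊆ interior Eᶜ :=
    interior_maximal (fun v hv ↦ pointOver_eta v ▸ (h _ _).2 hv)
      (isOpen_lt (by fun_prop) (by fun_prop))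
  intro v hv
  apply le_antisymm
  · by_contra! hlt
    exact disjoint_interior_frontier.notMem_of_mem_left (above_mem_interior hlt) hv
  · by_contra! hlt
    rw [← frontier_compl] at hv
    exact disjoint_interior_frontier.notMem_of_mem_left (below_mem_interior hlt) hv

theorem frontier_eq {f : (Fin 3 → ℝ) → ℝ} (hf : Continuous f)
    (h : ∀ w, IsEpigraphOver E f w) : frontier E = {v | v 2 = f ![v 0, v 1, v 3]} := by
  refine (frontier_subset hf h).antisymm fun v (hv : v 2 = f ![v 0, v 1, v 3]) ↦ ?_
  rw [← pointOver_eta v, hv]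
  exact (h _).pointOver_mem_frontier

end IsEpigraphOver

theorem monotone_U_epigraph_global_general {E : Set (Fin 4 → ℝ)} (hE : PreciselyMonotone E)
    (f : (Fin 3 → ℝ) →ᵃ[ℝ] ℝ) {W : Set (Fin 3 → ℝ)} (hW : IsOpen W) (hW_nonempty : W.Nonempty)
    (h : ∀ w ∈ W, IsEpigraphOver E f w) :
    frontier E = {v : Fin 4 → ℝ | v 2 = f ![v 0, v 1, v 3]} :=
  IsEpigraphOver.frontier_eq f.continuous_of_finiteDimensional
    (IsEpigraphOver.forall_of_isOpen hE f hW hW_nonempty h)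

/-- **Monotone `U`-epigraphs (global statement):** if near the origin the boundary of
`E` is the `u`-graph of `ax + by + ct` (with epigraph in `Int(E)` and ipograph in
`Int(Eᶜ)`), then `∂E` is the whole hyperplane `u = ax + by + ct`. -/
theorem monotone_U_epigraph_global
    (E : Set (Fin 4 → ℝ)) (hE : PreciselyMonotone E)
    (h0 : (0 : Fin 4 → ℝ) ∈ frontier E)
    (h1 : (![0, 0, 1, 0] : Fin 4 → ℝ) ∈ interior E)
    (a b c : ℝ) (W : Set (Fin 3 → ℝ)) (hW : IsOpen W) (h0W : (0 : Fin 3 → ℝ) ∈ W)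
    (hgr : ∀ w ∈ W,
      (![w 0, w 1, a * w 0 + b * w 1 + c * w 2, w 2] : Fin 4 → ℝ) ∈ frontier E)
    (hepi : ∀ w ∈ W, ∀ u : ℝ, a * w 0 + b * w 1 + c * w 2 < u →
      (![w 0, w 1, u, w 2] : Fin 4 → ℝ) ∈ interior E)
    (hipo : ∀ w ∈ W, ∀ u : ℝ, u < a * w 0 + b * w 1 + c * w 2 →
      (![w 0, w 1, u, w 2] : Fin 4 → ℝ) ∈ interior Eᶜ) :
    frontier E = {v : Fin 4 → ℝ | v 2 = a * v 0 + b * v 1 + c * v 3} := by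
  let f : (Fin 3 → ℝ) →ₗ[ℝ] ℝ := a • .proj 0 + b • .proj 1 + c • .proj 2
  exact monotone_U_epigraph_global_general hE f.toAffineMap hW ⟨0, h0W⟩ fun w hw u ↦
    ⟨fun hu ↦ interior_subset (hepi w hw u hu), fun hu ↦ interior_subset (hipo w hw u hu)⟩
end
end
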